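/- If the TSL formula φ associated with the PCP instance is realizable, then the PCP instance has a solution, i.e., there exists a finite index sequence i_0,…,i_k with w_{i_0} w_{i_1} ⋯ w_{i_k} = v_{i_0} v_{i_1} ⋯ v_{i_k}. -/

import Mathlib

set_option autoImplicit false

namespace TSLspec

/-- Function terms over input-signal names `I`, output-signal names `O` and
function names `F` with arities `arF`.  The constructor `init s` is the fresh
`0`-ary constant term `init_s` providing the initial value of the output
signal `s`. -/
inductive FTerm (I O F : Type) (arF : F → ℕ) : Type where
  | inp  : I → FTerm I O F arF
  | out  : O → FTerm I O F arF
  | init : O → FTerm I O F arF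
  | app  : (f : F) → (Fin (arF f) → FTerm I O F arF) → FTerm I O F arF

variable {I O F P : Type} {arF : F → ℕ} {arP : P → ℕ}

/-- Predicate terms `p(τ₀, …, τ_{n-1})`. -/
structure PTerm (I O F P : Type) (arF : F → ℕ) (arP : P → ℕ) : Type where
  pred : P
  args : Fin (arP pred) → FTerm I O F arF

/-- A computation step is a map from output names to function terms; a
computation is an infinite sequence of computation steps. -/
abbrev Computation (I O F : Type) (arF : F → ℕ) : Type :=
  ℕ → O → FTerm I O F arF

/-- Substitute each output name `s` by `c s`. -/
def substOut (c : O → FTerm I O F arF) : FTerm I O F arF → FTerm I O F arF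
  | .inp i => .inp i
  | .out s => c s
  | .init s => .init s
  | .app f a => .app f (fun k => substOut c (a k))

/-- Substitute each output name `s` by the constant `init_s`. -/
def substInit : FTerm I O F arF → FTerm I O F arF
  | .inp i => .inp i
  | .out s => .init s
  | .init s => .init s
  | .app f a => .app f (fun k => substInit (a k))

/-- The evaluation function `η`: `η(ς,t,s) = s` for input names `s`;
`η(ς,0,s) = init_s` for output names `s`; `η(ς,t,s) = η(ς,t-1,ς(t-1)(s))` for
output names `s` and `t > 0`; and `η` commutes with applications. -/
def eta (ς : Computation I O F arF) : ℕ → FTerm I O F arF → FTerm I O F arF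
  | 0, τ => substInit τ
  | t + 1, τ => eta ς t (substOut (ς t) τ)

/-- `η` applied to a predicate term (argumentwise). -/
def etaP (ς : Computation I O F arF) (t : ℕ)
    (pt : PTerm I O F P arF arP) : PTerm I O F P arF arP :=
  ⟨pt.pred, fun k => eta ς t (pt.args k)⟩

/-- An assignment `⟨·⟩`: values for input names, an `n`-ary function on
values for each `n`-ary function name, an `n`-ary Boolean predicate on values
for each `n`-ary predicate name, and an initial value `⟨init_s⟩` for each
output name `s`. -/
structure Assignment (V I O F P : Type) (arF : F → ℕ) (arP : P → ℕ) :
    Type where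
  inpVal  : I → V
  fnVal   : (f : F) → (Fin (arF f) → V) → V
  prVal   : (p : P) → (Fin (arP p) → V) → Bool
  initVal : O → V

variable {V : Type}

/-- Evaluation of a function term under an assignment, in an environment
`env` interpreting the output names.  For terms containing no output names
the result is independent of `env`. -/
def evalF (A : Assignment V I O F P arF arP) (env : O → V) :
    FTerm I O F arF → V
  | .inp i => A.inpVal i
  | .out s => env s
  | .init s => A.initVal s
  | .app f a => A.fnVal f (fun k => evalF A env (a k))

/-- Evaluation of a predicate term. -/
def evalP (A : Assignment V I O F P arF arP) (env : O → V)
    (pt : PTerm I O F P arF arP) : Bool :=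
  A.prVal pt.pred (fun k => evalF A env (pt.args k))

/-- TSL formulas. -/
inductive Formula (I O F P : Type) (arF : F → ℕ) (arP : P → ℕ) : Type where
  | predT  : PTerm I O F P arF arP → Formula I O F P arF arP
  | updT   : O → FTerm I O F arF → Formula I O F P arF arP
  | notT   : Formula I O F P arF arP → Formula I O F P arF arP
  | andT   : Formula I O F P arF arP → Formula I O F P arF arP →
             Formula I O F P arF arP
  | nextT  : Formula I O F P arF arP → Formula I O F P arF arP
  | untilT : Formula I O F P arF arP → Formula I O F P arF arP →
             Formula I O F P arF arP

/-- TSL satisfaction `ς,t ⊨ φ` (under the assignment `A`).  A predicate term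
is satisfied iff its `η`-unfolding evaluates to `true` (the unfolding
contains no output names, so the value is independent of the environment and
we quantify over all environments); an update term `[s ↜ τ]` is satisfied
iff `ς(t)(s) = τ` syntactically. -/
def Sat (A : Assignment V I O F P arF arP) (ς : Computation I O F arF) :
    Formula I O F P arF arP → ℕ → Prop
  | .predT pt, t => ∀ env : O → V, evalP A env (etaP ς t pt) = true
  | .updT s τ, t => ς t s = τ
  | .notT ψ, t => ¬ Sat A ς ψ t
  | .andT ψ θ, t => Sat A ς ψ t ∧ Sat A ς θ t
  | .nextT ψ, t => Sat A ς ψ (t + 1)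
  | .untilT θ ψ, t =>
      ∃ u, t ≤ u ∧ Sat A ς ψ u ∧ ∀ t', t ≤ t' → t' < u → Sat A ς θ t'

/-- A TSL formula is realizable iff some computation satisfies it under every
assignment (over every set of values). -/
def Realizable (φ : Formula I O F P arF arP) : Prop :=
  ∃ ς : Computation I O F arF,
    ∀ (V : Type) (A : Assignment V I O F P arF arP), Sat A ς φ 0

/- Derived TSL operators. -/

/-- A tautology (built from the formula `θ`). -/
def tslTrue (θ : Formula I O F P arF arP) : Formula I O F P arF arP :=
  .notT (.andT θ (.notT θ))

def tslFalse (θ : Formula I O F P arF arP) : Formula I O F P arF arP :=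
  .notT (tslTrue θ)

def tslOr (a b : Formula I O F P arF arP) : Formula I O F P arF arP :=
  .notT (.andT (.notT a) (.notT b))

def tslImp (a b : Formula I O F P arF arP) : Formula I O F P arF arP :=
  .notT (.andT a (.notT b))

def tslIff (a b : Formula I O F P arF arP) : Formula I O F P arF arP :=
  .andT (tslImp a b) (tslImp b a)

/-- Finally: `F θ = true 𝒰 θ`. -/
def tslF (base θ : Formula I O F P arF arP) : Formula I O F P arF arP :=
  .untilT (tslTrue base) θ

/-- Always: `G θ = ¬ F ¬ θ`. -/
def tslG (base θ : Formula I O F P arF arP) : Formula I O F P arF arP :=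
  .notT (tslF base (.notT θ))

def bigAndT (base : Formula I O F P arF arP)
    (l : List (Formula I O F P arF arP)) : Formula I O F P arF arP :=
  l.foldr .andT (tslTrue base)

def bigOrT (base : Formula I O F P arF arP)
    (l : List (Formula I O F P arF arP)) : Formula I O F P arF arP :=
  l.foldr tslOr (tslFalse base)

end TSLspec
namespace TSLspec

/-- The two output names `A` and `B`. -/
inductive ABName : Type where
  | A : ABName
  | B : ABName
deriving DecidableEq

/-- Function names for the PCP reduction: a unary function name for every
letter of the alphabet `Sig`, and a `0`-ary function name `X`. -/
abbrev PCPFn (Sig : Type) : Type := Sig ⊕ Unit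

/-- Arities: letters are unary, `X` is `0`-ary. -/
def pcpArF (Sig : Type) : PCPFn Sig → ℕ
  | .inl _ => 1
  | .inr _ => 0

/-- Arity of the single predicate name `p`: unary. -/
def pcpArP : Unit → ℕ := fun _ => 1

/-- Function terms of the PCP reduction: no input names, output names `A`
and `B`. -/
abbrev PCPTerm (Sig : Type) : Type :=
  FTerm Empty ABName (PCPFn Sig) (pcpArF Sig)

/-- `μ(x₀x₁⋯x_m, τ) = x₀(x₁(⋯ x_m(τ) ⋯))`. -/
def muPCP {Sig : Type} : List Sig → PCPTerm Sig → PCPTerm Sig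
  | [], τ => τ
  | x :: xs, τ => .app (Sum.inl x) (fun _ => muPCP xs τ)

/-- The constant term `X()`. -/
def Xpcp (Sig : Type) : PCPTerm Sig := .app (Sum.inr ()) (fun k => k.elim0)

/-- The predicate term `p(A)`. -/
def pA (Sig : Type) : PTerm Empty ABName (PCPFn Sig) Unit (pcpArF Sig) pcpArP :=
  ⟨(), fun _ => .out ABName.A⟩

/-- The predicate term `p(B)`. -/
def pB (Sig : Type) : PTerm Empty ABName (PCPFn Sig) Unit (pcpArF Sig) pcpArP :=
  ⟨(), fun _ => .out ABName.B⟩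

/-- The TSL formula associated with the PCP instance `w, v`:
`([A ↜ X()] ∧ [B ↜ X()]) ∧ ◯ G (⋁_j ([A ↜ μ(w_j, A)] ∧ [B ↜ μ(v_j, B)]))
∧ ◯◯ F (p(A) ↔ p(B))`. -/
def pcpFormula {Sig : Type} {n : ℕ} (w v : Fin (n + 1) → List Sig) :
    Formula Empty ABName (PCPFn Sig) Unit (pcpArF Sig) pcpArP :=
  let updA : Formula Empty ABName (PCPFn Sig) Unit (pcpArF Sig) pcpArP :=
    .updT ABName.A (Xpcp Sig)
  let updB : Formula Empty ABName (PCPFn Sig) Unit (pcpArF Sig) pcpArP :=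
    .updT ABName.B (Xpcp Sig)
  let choices := (List.finRange (n + 1)).map (fun j =>
    Formula.andT (.updT ABName.A (muPCP (w j) (.out ABName.A)))
                 (.updT ABName.B (muPCP (v j) (.out ABName.B))))
  .andT (.andT updA updB)
    (.andT (.nextT (tslG updA (bigOrT updA choices)))
           (.nextT (.nextT
             (tslF updA (tslIff (.predT (pA Sig)) (.predT (pB Sig)))))))

end TSLspec
namespace TSLspec

/-!
Under the assignment that reads every letter `x` as `l ↦ x :: l` and `X()` as the empty word, the
values of `A` and `B` at time `m + 1` are the concatenations of the words `w_j` and `v_j` along the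
first `m` choices of index, latest first. Suppose that the two never agree for `m > 0`. Since all
words are nonempty, a longest of the two values at a given time is longer than every earlier value
of `A` or `B`, so its truth value under `p` can still be chosen freely, namely opposite to that of
the other one. The resulting `p` violates `F (p(A) ↔ p(B))`, although the computation, which cannot
depend on the assignment, was supposed to satisfy it.
-/

section Coloring

variable {ι α β : Type*}

theorem exists_kernel_of_wellFounded {r : ι → ι → Prop} (hr : WellFounded r) :
    ∃ K : Set ι, ∀ m, m ∈ K ↔ ∀ k, r k m → k ∉ K :=
  ⟨hr.fix fun m K => ∀ k (hk : r k m), ¬ K k hk, fun _ => iff_of_eq (hr.fix_eq _ _)⟩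

theorem exists_set_mem_iff_notMem_of_wellFounded {a b : ι → α} (ha : a.Injective)
    (hwf : WellFounded fun k m => a k = b m) :
    ∃ S : Set α, ∀ m, a m ∈ S ↔ b m ∉ S := by
  obtain ⟨K, hK⟩ := exists_kernel_of_wellFounded hwf
  refine ⟨a '' K, fun m => ?_⟩
  rw [ha.mem_set_image, hK]
  exact ⟨fun h ⟨k, hkK, hk⟩ => h k hk hkK, fun h k hk hkK => h ⟨k, hkK, hk⟩⟩

theorem exists_set_mem_iff_notMem_of_strictMono [LinearOrder ι] [WellFoundedLT ι] [LinearOrder β]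
    {rank : α → β} {u v : ι → α} (hu : StrictMono (rank ∘ u)) (hv : StrictMono (rank ∘ v))
    (hne : ∀ m, u m ≠ v m) :
    ∃ S : Set α, ∀ m, u m ∈ S ↔ v m ∉ S := by
  let a m := if rank (v m) ≤ rank (u m) then u m else v m
  let b m := if rank (v m) ≤ rank (u m) then v m else u m
  have rank_a m : rank (a m) = max (rank (u m)) (rank (v m)) := by grind
  have rank_b_le m : rank (b m) ≤ rank (a m) := by grind
  have a_ne_b m : a m ≠ b m := by grind
  have ha : StrictMono (rank ∘ a) := fun k m hkm => by
    simpa only [Function.comp_apply, rank_a] using max_lt_max (hu hkm) (hv hkm)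
  have lt_of_a_eq_b {k m} (h : a k = b m) : k < m := by
    refine (ha.le_iff_le.1 (h ▸ rank_b_le m : rank (a k) ≤ rank (a m))).lt_of_ne ?_
    rintro rfl
    exact a_ne_b k h
  obtain ⟨S, hS⟩ := exists_set_mem_iff_notMem_of_wellFounded ha.injective.of_comp
    (Subrelation.wf lt_of_a_eq_b wellFounded_lt)
  exact ⟨S, fun m => by grind⟩

end Coloring

section ConcatRev

variable {α : Type*}

/-- The concatenation `x_{m-1} ⋯ x_1 x_0` of the first `m` words of a sequence. The order is
reversed because the update `[s ↜ μ(x, s)]` prepends `x` to the current value of `s`. -/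
def concatRev (x : ℕ → List α) (m : ℕ) : List α :=
  (List.ofFn fun i : Fin m => x i.rev).flatten

theorem concatRev_zero (x : ℕ → List α) : concatRev x 0 = [] := by
  simp [concatRev]

theorem concatRev_succ (x : ℕ → List α) (m : ℕ) :
    concatRev x (m + 1) = x m ++ concatRev x m := by
  simp [concatRev, List.ofFn_succ]

theorem strictMono_length_concatRev {x : ℕ → List α} (hx : ∀ m, x m ≠ []) :
    StrictMono (List.length ∘ concatRev x) :=
  strictMono_nat_of_lt_succ fun m => by
    simpa [concatRev_succ] using List.length_pos_iff.2 (hx m)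

end ConcatRev

section Semantics

variable {V I O F P : Type} {arF : F → ℕ} {arP : P → ℕ} {A : Assignment V I O F P arF arP}
  {ς : Computation I O F arF} {t : ℕ} {base φ ψ : Formula I O F P arF arP}

theorem sat_tslTrue : Sat A ς (tslTrue base) t := by
  simp [tslTrue, Sat]

theorem not_sat_tslFalse : ¬ Sat A ς (tslFalse base) t :=
  not_not_intro sat_tslTrue

theorem sat_tslOr : Sat A ς (tslOr φ ψ) t ↔ Sat A ς φ t ∨ Sat A ς ψ t := by
  simp only [tslOr, Sat]
  tauto

theorem sat_tslIff : Sat A ς (tslIff φ ψ) t ↔ (Sat A ς φ t ↔ Sat A ς ψ t) := by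
  simp only [tslIff, tslImp, Sat]
  tauto

theorem sat_tslF : Sat A ς (tslF base φ) t ↔ ∃ u ≥ t, Sat A ς φ u := by
  simp [tslF, Sat, sat_tslTrue]

theorem sat_tslG : Sat A ς (tslG base φ) t ↔ ∀ u ≥ t, Sat A ς φ u := by
  simp [tslG, Sat, sat_tslF]

theorem sat_bigOrT {l : List (Formula I O F P arF arP)} :
    Sat A ς (bigOrT base l) t ↔ ∃ ψ ∈ l, Sat A ς ψ t := by
  induction l with
  | nil => exact iff_of_false not_sat_tslFalse (by simp)
  | cons χ l ih => exact sat_tslOr.trans (by rw [List.exists_mem_cons_iff, ← ih, bigOrT])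

theorem eta_app (f : F) (a : Fin (arF f) → FTerm I O F arF) :
    eta ς t (.app f a) = .app f fun k => eta ς t (a k) := by
  induction t generalizing a with
  | zero => rfl
  | succ t ih => exact ih _

end Semantics

section Reduction

variable {Sig : Type} {ς : Computation Empty ABName (PCPFn Sig) (pcpArF Sig)}

theorem muPCP_append (l l' : List Sig) (τ : PCPTerm Sig) :
    muPCP (l ++ l') τ = muPCP l (muPCP l' τ) := by
  induction l with
  | nil => rfl
  | cons x l ih => simp only [List.cons_append, muPCP, ih]

theorem eta_muPCP (t : ℕ) (l : List Sig) (τ : PCPTerm Sig) :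
    eta ς t (muPCP l τ) = muPCP l (eta ς t τ) := by
  induction l with
  | nil => rfl
  | cons x l ih => simp only [muPCP, eta_app, ih]

theorem eta_Xpcp (t : ℕ) : eta ς t (Xpcp Sig) = Xpcp Sig := by
  rw [Xpcp, eta_app]
  congr 1
  exact funext fun k => k.elim0

theorem eta_out_succ {s : ABName} {x : ℕ → List Sig} (h_zero : ς 0 s = Xpcp Sig)
    (h_succ : ∀ m, ς (m + 1) s = muPCP (x m) (.out s)) (m : ℕ) :
    eta ς (m + 1) (.out s) = muPCP (concatRev x m) (Xpcp Sig) := by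
  induction m with
  | zero => rw [eta, substOut, h_zero, eta_Xpcp, concatRev_zero, muPCP]
  | succ m ih => rw [eta, substOut, h_succ, eta_muPCP, ih, concatRev_succ, muPCP_append]

open Classical in
/-- The free interpretation of the terms of the reduction as words: a letter prepends itself, `X()`
is the empty word, and `p` is membership in `S`. The initial values are arbitrary, since the first
step of a computation satisfying `pcpFormula` overwrites both outputs with `X()`. -/
noncomputable def wordAssignment (S : Set (List Sig)) :
    Assignment (List Sig) Empty ABName (PCPFn Sig) Unit (pcpArF Sig) pcpArP where
  inpVal := Empty.elim
  fnVal
    | .inl x, a => x :: a (0 : Fin 1)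
    | .inr _, _ => []
  prVal _ a := decide (a (0 : Fin 1) ∈ S)
  initVal _ := []

theorem evalF_wordAssignment_muPCP (S : Set (List Sig)) (env : ABName → List Sig) (l : List Sig) :
    evalF (wordAssignment S) env (muPCP l (Xpcp Sig)) = l := by
  induction l with
  | nil => rfl
  | cons x l ih => exact congrArg (x :: ·) ih

theorem sat_wordAssignment_predT {S : Set (List Sig)} {t : ℕ} {τ : PCPTerm Sig} {l : List Sig}
    (h : eta ς t τ = muPCP l (Xpcp Sig)) :
    Sat (wordAssignment S) ς (.predT ⟨(), fun _ => τ⟩) t ↔ l ∈ S := by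
  simp only [Sat, evalP, etaP, h, evalF_wordAssignment_muPCP]
  simp [wordAssignment]

theorem sat_pcpFormula {V : Type} {n : ℕ} {w v : Fin (n + 1) → List Sig}
    {A : Assignment V Empty ABName (PCPFn Sig) Unit (pcpArF Sig) pcpArP} :
    Sat A ς (pcpFormula w v) 0 ↔
      (ς 0 .A = Xpcp Sig ∧ ς 0 .B = Xpcp Sig) ∧
      (∀ t ≥ 1, ∃ j, ς t .A = muPCP (w j) (.out .A) ∧ ς t .B = muPCP (v j) (.out .B)) ∧
      ∃ t ≥ 2, Sat A ς (.predT (pA Sig)) t ↔ Sat A ς (.predT (pB Sig)) t := by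
  simp [pcpFormula, Sat, sat_tslG, sat_bigOrT, sat_tslF, sat_tslIff]

end Reduction

theorem pcp_of_realizable_general {Sig : Type} {n : ℕ} (w v : Fin (n + 1) → List Sig)
    (hw : ∀ j, w j ≠ []) (hv : ∀ j, v j ≠ []) (hreal : Realizable (pcpFormula w v)) :
    ∃ (k : ℕ) (i : Fin (k + 1) → Fin (n + 1)),
      (List.ofFn fun j => w (i j)).flatten =
      (List.ofFn fun j => v (i j)).flatten := by
  obtain ⟨ς, hς⟩ := hreal
  have hsat S := sat_pcpFormula.1 (hς _ (wordAssignment S))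
  obtain ⟨⟨hA, hB⟩, hstep, -⟩ := hsat ∅
  choose j hjA hjB using fun m => hstep (m + 1) m.succ_pos
  by_contra! hne
  obtain ⟨S, hS⟩ := exists_set_mem_iff_notMem_of_strictMono (rank := List.length)
    (u := fun m => concatRev (fun k => w (j k)) (m + 1))
    (v := fun m => concatRev (fun k => v (j k)) (m + 1))
    ((strictMono_length_concatRev fun m => hw (j m)).comp (strictMono_id.add_const 1))
    ((strictMono_length_concatRev fun m => hv (j m)).comp (strictMono_id.add_const 1))
    fun m => hne m fun i => j i.rev
  obtain ⟨-, -, t, ht, hAB⟩ := hsat S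
  obtain ⟨m, rfl⟩ := Nat.exists_eq_add_of_le' ht
  rw [pA, pB, sat_wordAssignment_predT (eta_out_succ hA hjA (m + 1)),
    sat_wordAssignment_predT (eta_out_succ hB hjB (m + 1))] at hAB
  exact iff_not_self (hAB.symm.trans (hS m))

/-- If the TSL formula associated with the PCP instance
`w, v` (over a finite alphabet, with nonempty words) is realizable, then the
PCP instance has a solution: there is a finite index sequence `i₀,…,i_k` with
`w_{i₀}w_{i₁}⋯w_{i_k} = v_{i₀}v_{i₁}⋯v_{i_k}`. -/
theorem pcp_of_realizable {Sig : Type} [Finite Sig] {n : ℕ}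
    (w v : Fin (n + 1) → List Sig)
    (hw : ∀ j, w j ≠ []) (hv : ∀ j, v j ≠ [])
    (hreal : Realizable (pcpFormula w v)) :
    ∃ (k : ℕ) (i : Fin (k + 1) → Fin (n + 1)),
      (List.ofFn fun j => w (i j)).flatten =
      (List.ofFn fun j => v (i j)).flatten :=
  pcp_of_realizable_general w v hw hv hreal

end TSLspec
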